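/- (Proposition 1, ratio space.) Let β_w, β_l > 0 and x_w, x_l > 0 be real numbers. Let d_w be the derivative at x_w of x ↦ −log σ(β_w·log x − β_l·log x_l), and let d_l be the derivative at x_l of x ↦ −log σ(β_w·log x_w − β_l·log x). Then |d_w| = |d_l| if and only if β_w / β_l = x_w / x_l. -/

import Mathlib

/-!
Since `-log σ(t) = log (1 + exp (-t))`, the function `t ↦ -log σ(t)` has derivative `-σ(-t)`.
Both partial derivatives are taken at the same margin `Δ = βw * log xw - βl * log xl`, so the chain
rule gives `|d_w| = σ(-Δ) * (βw / xw)` and `|d_l| = σ(-Δ) * (βl / xl)`. The common factor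
`σ(-Δ)` is positive and cancels, leaving `βw / xw = βl / xl`, which is the claimed ratio identity.
-/

/-- The logistic sigmoid σ(t) = 1/(1 + exp(−t)). -/
noncomputable def sigmoid (t : ℝ) : ℝ := 1 / (1 + Real.exp (-t))

theorem sigmoid_pos (t : ℝ) : 0 < sigmoid t := by
  unfold sigmoid
  positivity

theorem hasDerivAt_neg_log_sigmoid (t : ℝ) :
    HasDerivAt (fun t : ℝ => -Real.log (sigmoid t)) (-sigmoid (-t)) t := by
  have hlog : (fun t : ℝ => -Real.log (sigmoid t)) = fun t => Real.log (1 + Real.exp (-t)) := by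
    funext s
    simp [sigmoid]
  rw [hlog]
  have hpos : 1 + Real.exp (-t) ≠ 0 := by positivity
  convert (((hasDerivAt_neg t).exp).const_add 1).log hpos using 1
  simp only [sigmoid, neg_neg, Real.exp_neg]
  field_simp
  ring

/-- Proposition 1, ratio space: `|d_w| = |d_l|` iff
`β_w / β_l = x_w / x_l`. -/
theorem adadpo_balance_ratio_iff (βw βl xw xl : ℝ) (hβw : 0 < βw) (hβl : 0 < βl)
    (hxw : 0 < xw) (hxl : 0 < xl) :
    (|deriv (fun x : ℝ => -Real.log (sigmoid (βw * Real.log x - βl * Real.log xl))) xw| =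
     |deriv (fun x : ℝ => -Real.log (sigmoid (βw * Real.log xw - βl * Real.log x))) xl|)
    ↔ βw / βl = xw / xl := by
  have hw := (hasDerivAt_neg_log_sigmoid (βw * Real.log xw - βl * Real.log xl)).comp xw
    (((Real.hasDerivAt_log hxw.ne').const_mul βw).sub_const (βl * Real.log xl))
  have hl := (hasDerivAt_neg_log_sigmoid (βw * Real.log xw - βl * Real.log xl)).comp xl
    (((Real.hasDerivAt_log hxl.ne').const_mul βl).const_sub (βw * Real.log xw))
  have hs := sigmoid_pos (-(βw * Real.log xw - βl * Real.log xl))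
  simp only [Function.comp_def] at hw hl
  rw [hw.deriv, hl.deriv, neg_mul_neg, neg_mul, abs_neg, abs_of_pos (by positivity),
    abs_of_pos (by positivity), mul_right_inj' hs.ne', ← div_eq_mul_inv, ← div_eq_mul_inv,
    div_eq_div_iff hxw.ne' hxl.ne', div_eq_div_iff hβl.ne' hxl.ne', mul_comm βl xw]
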